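/- Every finite extensive-form game with perfect recall possesses a semi-sequential equilibrium: there exist a behavioral strategy profile β* and a belief system μ* forming a semi-sequential equilibrium. -/

import Mathlib

open scoped Classical

noncomputable section

/-- A finite extensive-form game.  Actions are labelled by natural numbers drawn from the
finite pool `actFinset`; a history is the list of actions taken so far; players are `Fin n`
and `P h = none` means that the chance player moves after `h`.  The information sets of
player `i` are `Info i j` for `j < m i`, and `infoIdx h` is the index of the information
set containing a nonterminal history `h` at which some player moves.  Payoffs `u i h` are
relevant on terminal histories. -/
structure EFG where
  n : ℕ
  actFinset : Finset ℕ
  H : Finset (List ℕ)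
  P : List ℕ → Option (Fin n)
  fc : List ℕ → ℕ → ℝ
  m : Fin n → ℕ
  Info : Fin n → ℕ → Finset (List ℕ)
  infoIdx : List ℕ → ℕ
  u : Fin n → List ℕ → ℝ
  empty_mem : ([] : List ℕ) ∈ H
  prefixClosed : ∀ h ∈ H, ∀ h' : List ℕ, h' <+: h → h' ∈ H
  act_mem : ∀ (h : List ℕ) (a : ℕ), h ++ [a] ∈ H → a ∈ actFinset
  fc_nonneg : ∀ h a, 0 ≤ fc h a
  fc_sum : ∀ h ∈ H, P h = none → (∃ a, h ++ [a] ∈ H) →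
    ∑ a ∈ actFinset.filter (fun a => h ++ [a] ∈ H), fc h a = 1
  info_spec : ∀ (i : Fin n) (j : ℕ) (h : List ℕ), j < m i →
    (h ∈ Info i j ↔ h ∈ H ∧ P h = some i ∧ (∃ a, h ++ [a] ∈ H) ∧ infoIdx h = j)
  infoIdx_lt : ∀ (i : Fin n), ∀ h ∈ H, P h = some i → (∃ a, h ++ [a] ∈ H) → infoIdx h < m i
  info_nonempty : ∀ (i : Fin n) (j : ℕ), j < m i → (Info i j).Nonempty
  info_actions : ∀ (i : Fin n) (j : ℕ), j < m i → ∀ h ∈ Info i j, ∀ h' ∈ Info i j,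
    ∀ a : ℕ, (h ++ [a] ∈ H ↔ h' ++ [a] ∈ H)
  act_unique : ∀ (h h' : List ℕ) (a : ℕ), h ∈ H → h' ∈ H → h ++ [a] ∈ H → h' ++ [a] ∈ H →
    P h = P h' ∧ infoIdx h = infoIdx h'

namespace EFG

/-- Behavioral strategy profiles (player, information-set index, action ↦ probability). -/
abbrev Profile (G : EFG) : Type := Fin G.n → ℕ → ℕ → ℝ

/-- Belief systems (player, information-set index, history ↦ probability). -/
abbrev Belief (G : EFG) : Type := Fin G.n → ℕ → List ℕ → ℝ

variable (G : EFG)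

/-- The set `Z` of terminal histories. -/
def Zset : Finset (List ℕ) := G.H.filter fun h => ∀ a : ℕ, h ++ [a] ∉ G.H

/-- The set `A(h)` of actions available after a history. -/
def A (h : List ℕ) : Finset ℕ := G.actFinset.filter fun a => h ++ [a] ∈ G.H

/-- The common action set `A(I_i^j)` of an information set. -/
def infoA (i : Fin G.n) (j : ℕ) : Finset ℕ := (G.Info i j).sup fun h => G.A h

/-- A behavioral strategy of player `i`: a probability distribution on `A(I_i^j)` for
each information set `I_i^j`. -/
def IsBehStrategy (i : Fin G.n) (b : ℕ → ℕ → ℝ) : Prop :=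
  ∀ j < G.m i, (∀ a ∈ G.infoA i j, 0 ≤ b j a) ∧ ∑ a ∈ G.infoA i j, b j a = 1

/-- A behavioral strategy profile. -/
def IsBehProfile (β : G.Profile) : Prop := ∀ i : Fin G.n, G.IsBehStrategy i (β i)

/-- The probability of action `a` at history `h`: the chance distribution if the chance
player moves, and the mover's behavioral strategy otherwise. -/
def moveProb (β : G.Profile) (h : List ℕ) (a : ℕ) : ℝ :=
  (G.P h).elim (G.fc h a) fun i => β i (G.infoIdx h) a

/-- Player `i`'s record `X_i` of the information sets he encounters along a history and the
actions he takes at them, accumulated starting from the prefix `pre`. -/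
def recordFrom (i : Fin G.n) : List ℕ → List ℕ → List (ℕ × ℕ)
  | _, [] => []
  | pre, b :: rest =>
    (if G.P pre = some i then [(G.infoIdx pre, b)] else []) ++ recordFrom i (pre ++ [b]) rest

/-- Perfect recall. -/
def PerfectRecall : Prop :=
  ∀ (i : Fin G.n) (j : ℕ), j < G.m i →
    ∀ h ∈ G.Info i j, ∀ h' ∈ G.Info i j, G.recordFrom i [] h = G.recordFrom i [] h'

/-- Product of the move probabilities along `rest`, continuing from the prefix `pre`. -/
def prodAlong (β : G.Profile) : List ℕ → List ℕ → ℝ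
  | _, [] => 1
  | pre, b :: rest => G.moveProb β pre b * prodAlong β (pre ++ [b]) rest

/-- `ω(h|β)`: the probability that the moves along `h` are played under `β`. -/
def omega (β : G.Profile) (h : List ℕ) : ℝ := G.prodAlong β [] h

/-- `ω(I_i^j|β)`. -/
def omegaInfo (i : Fin G.n) (j : ℕ) (β : G.Profile) : ℝ := ∑ h ∈ G.Info i j, G.omega β h

/-- Product of the move probabilities along `rest` from `pre`, disregarding player `i`'s
own moves. -/
def prodAlongNot (i : Fin G.n) (β : G.Profile) : List ℕ → List ℕ → ℝ
  | _, [] => 1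
  | pre, b :: rest =>
    (if G.P pre = some i then 1 else G.moveProb β pre b) * prodAlongNot i β (pre ++ [b]) rest

/-- `S^i(h|β)`: probability of the moves along `h`, disregarding player `i`'s own moves. -/
def Sh (i : Fin G.n) (β : G.Profile) (h : List ℕ) : ℝ := G.prodAlongNot i β [] h

/-- `S^i(I_i^j|β)`. -/
def SInfo (i : Fin G.n) (j : ℕ) (β : G.Profile) : ℝ := ∑ h ∈ G.Info i j, G.Sh i β h

/-- Product of the move probabilities along `rest` from `pre`, with the factor at prefixes
lying in `I_i^j` omitted. -/
def prodAlongSkip (i : Fin G.n) (j : ℕ) (β : G.Profile) : List ℕ → List ℕ → ℝ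
  | _, [] => 1
  | pre, b :: rest =>
    (if pre ∈ G.Info i j then 1 else G.moveProb β pre b) * prodAlongSkip i j β (pre ++ [b]) rest

/-- `q ∈ M(a, I_i^j)`: `I_i^q` is a first information set of player `i` after action `a`
(every history in `I_i^q` contains `a`, with no later action of `a` lying in any action set
of player `i`). -/
def FirstAfter (i : Fin G.n) (a : ℕ) (q : ℕ) : Prop :=
  q < G.m i ∧ ∀ h ∈ G.Info i q, ∃ l₁ l₂ : List ℕ,
    h = l₁ ++ a :: l₂ ∧ ∀ b ∈ l₂, ∀ p < G.m i, b ∉ G.infoA i p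

/-- `q ∈ M(I_i^j) = ∪_{a ∈ A(I_i^j)} M(a, I_i^j)`. -/
def MInfo (i : Fin G.n) (j : ℕ) (q : ℕ) : Prop := ∃ a ∈ G.infoA i j, G.FirstAfter i a q

/-- `q ∈ Λ(a, I_i^j)`: every history in `I_i^q` contains the action `a`. -/
def LambdaSet (i : Fin G.n) (a : ℕ) (q : ℕ) : Prop :=
  q < G.m i ∧ ∀ h ∈ G.Info i q, ∃ l₁ l₂ : List ℕ, h = l₁ ++ a :: l₂

/-- `ϱ^i_{I_i^j}(β, β̃)`: replace player `i`'s component of `β` by that of `β̃` at every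
information set `I_i^q` such that some history in `I_i^q` contains an action of `A(I_i^j)`. -/
def rho (i : Fin G.n) (j : ℕ) (β βt : G.Profile) : G.Profile := fun p q =>
  if p = i ∧ ∃ h ∈ G.Info i q, ∃ b ∈ h, b ∈ G.infoA i j then βt i q else β p q

/-- A belief system: a probability distribution on each information set. -/
def IsBelief (μ : G.Belief) : Prop :=
  ∀ (i : Fin G.n) (j : ℕ), j < G.m i →
    (∀ h ∈ G.Info i j, 0 ≤ μ i j h) ∧ ∑ h ∈ G.Info i j, μ i j h = 1

/-- A self-independent belief system for `β`:
`S^i(I_i^j|β) · μ^i_{I_i^j}(h) = S^i(h|β)`. -/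
def SelfIndep (β : G.Profile) (μ : G.Belief) : Prop :=
  ∀ (i : Fin G.n) (j : ℕ), j < G.m i → ∀ h ∈ G.Info i j,
    G.SInfo i j β * μ i j h = G.Sh i β h

/-- Auxiliary for `ν`: scan `rest` from `pre` for the subhistory lying in `I_i^j`, then
weight by the belief and multiply the move probabilities of the remaining moves (the move
taken at the subhistory itself being skipped). -/
def nuAux (i : Fin G.n) (j : ℕ) (β : G.Profile) (w : List ℕ → ℝ) : List ℕ → List ℕ → ℝ
  | _, [] => 0
  | pre, b :: rest =>
    if pre ∈ G.Info i j then w pre * G.prodAlong β (pre ++ [b]) rest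
    else nuAux i j β w (pre ++ [b]) rest

/-- `ν^i_{I_i^j}(h | a, β^{-I_i^j}, μ)` (it does not involve the component of `β` at
`I_i^j`). -/
def nu (i : Fin G.n) (j : ℕ) (β : G.Profile) (μ : G.Belief) (h : List ℕ) : ℝ :=
  G.nuAux i j β (μ i j) [] h

/-- `u^i((a, β^{-I_i^j}) ∧ I_i^j)`. -/
def uWedgeAct (i : Fin G.n) (j : ℕ) (a : ℕ) (β : G.Profile) : ℝ :=
  ∑ h ∈ G.Zset.filter (fun h => a ∈ h), G.u i h * G.prodAlongSkip i j β [] h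

/-- `u^i(β ∧ I_i^j)`. -/
def uWedge (i : Fin G.n) (j : ℕ) (β : G.Profile) : ℝ :=
  ∑ h ∈ G.Zset.filter (fun h => ∃ b ∈ h, b ∈ G.infoA i j), G.u i h * G.omega β h

/-- The conditional expected payoff `u^i(a, β^{-I_i^j}, μ | I_i^j)`. -/
def uCond (i : Fin G.n) (j : ℕ) (a : ℕ) (β : G.Profile) (μ : G.Belief) : ℝ :=
  ∑ h ∈ G.Zset.filter (fun h => a ∈ h), G.u i h * G.nu i j β μ h

/-- The expected payoff `u^i(β)`. -/
def uExp (i : Fin G.n) (β : G.Profile) : ℝ := ∑ h ∈ G.Zset, G.u i h * G.omega β h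

/-- The profile obtained from `β` by replacing all of player `i`'s components by `b`. -/
def replace (β : G.Profile) (i : Fin G.n) (b : ℕ → ℕ → ℝ) : G.Profile :=
  fun p => if p = i then b else β p

/-- `β` is a Nash equilibrium in behavioral strategies. -/
def IsNash (β : G.Profile) : Prop :=
  G.IsBehProfile β ∧ ∀ (i : Fin G.n) (b : ℕ → ℕ → ℝ), G.IsBehStrategy i b →
    G.uExp i (G.replace β i b) ≤ G.uExp i β

/-- `(β, β̃, μ)` satisfies the Nash characterization (Definition 2 of the paper). -/
def NashChar (β βt : G.Profile) (μ : G.Belief) : Prop :=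
  (∀ (i : Fin G.n) (j : ℕ), j < G.m i → ∀ a' ∈ G.infoA i j, ∀ a'' ∈ G.infoA i j,
    G.uWedgeAct i j a' (G.rho i j β βt) < G.uWedgeAct i j a'' (G.rho i j β βt) →
    β i j a' = 0) ∧
  (∀ (i : Fin G.n) (j : ℕ), j < G.m i → ∀ a' ∈ G.infoA i j, ∀ a'' ∈ G.infoA i j,
    G.uCond i j a' (G.rho i j β βt) μ < G.uCond i j a'' (G.rho i j β βt) μ →
    βt i j a' = 0) ∧
  G.IsBelief μ ∧ G.SelfIndep β μ

/-- `r` is the root of a subgame: every information set lies entirely inside or entirely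
outside the set of histories extending `r`. -/
def IsSubgameRoot (r : List ℕ) : Prop :=
  r ∈ G.H ∧ ∀ (i : Fin G.n) (j : ℕ), j < G.m i →
    (∀ h ∈ G.Info i j, r <+: h) ∨ ∀ h ∈ G.Info i j, ¬ r <+: h

/-- The depth `g` of the smallest subgame containing `A(I_i^j)` (the length of the longest
subgame root preceding every history of `I_i^j`). -/
def sgDepthInfo (i : Fin G.n) (j : ℕ) : ℕ :=
  (G.H.filter fun r => G.IsSubgameRoot r ∧ ∀ h ∈ G.Info i j, r <+: h).sup List.length

/-- The depth `q(h)` of the smallest subgame containing the last action of `h`. -/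
def sgDepthHist (h : List ℕ) : ℕ :=
  (G.H.filter fun r => G.IsSubgameRoot r ∧ r <+: h.dropLast).sup List.length

/-- `C^i_{I_i^j}(h|β)`: product of move probabilities along `h` within the smallest subgame
containing `A(I_i^j)`. -/
def Ch (i : Fin G.n) (j : ℕ) (β : G.Profile) (h : List ℕ) : ℝ :=
  G.prodAlong β (h.take (G.sgDepthInfo i j)) (h.drop (G.sgDepthInfo i j))

/-- `C^i_{I_i^j}(I_i^j|β)`. -/
def CInfo (i : Fin G.n) (j : ℕ) (β : G.Profile) : ℝ := ∑ h ∈ G.Info i j, G.Ch i j β h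

/-- `u^i((a, β^{-I_i^j}) ⋄ I_i^j)`. -/
def uDiamondAct (i : Fin G.n) (j : ℕ) (a : ℕ) (β : G.Profile) : ℝ :=
  ∑ h ∈ G.Zset.filter (fun h => a ∈ h), G.u i h *
    G.prodAlongSkip i j β (h.take (G.sgDepthInfo i j)) (h.drop (G.sgDepthInfo i j))

/-- `Y^i(h|β)`: like `S^i(h|β)` but within the smallest subgame containing the last action
of `h`. -/
def Yh (i : Fin G.n) (β : G.Profile) (h : List ℕ) : ℝ :=
  G.prodAlongNot i β (h.take (G.sgDepthHist h)) (h.drop (G.sgDepthHist h))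

/-- `Y^i(I_i^j|β)`. -/
def YInfo (i : Fin G.n) (j : ℕ) (β : G.Profile) : ℝ := ∑ h ∈ G.Info i j, G.Yh i β h

/-- The belief condition `Y^i(I_i^j|β) · μ^i_{I_i^j}(h) = Y^i(h|β)`. -/
def YConsistent (β : G.Profile) (μ : G.Belief) : Prop :=
  ∀ (i : Fin G.n) (j : ℕ), j < G.m i → ∀ h ∈ G.Info i j,
    G.YInfo i j β * μ i j h = G.Yh i β h

/-- The expected payoff of player `i` in the subgame rooted at `r` (payoffs of terminal
histories extending `r`, weighted by the move probabilities within the subgame). -/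
def uExpFrom (i : Fin G.n) (β : G.Profile) (r : List ℕ) : ℝ :=
  ∑ h ∈ G.Zset.filter (fun h => r <+: h), G.u i h * G.prodAlong β r (h.drop r.length)

/-- `β` is a subgame perfect equilibrium in behavioral strategies: its restriction to every
subgame is a Nash equilibrium in behavioral strategies of that subgame. -/
def IsSubgamePerfect (β : G.Profile) : Prop :=
  G.IsBehProfile β ∧ ∀ r : List ℕ, G.IsSubgameRoot r →
    ∀ (i : Fin G.n) (b : ℕ → ℕ → ℝ), G.IsBehStrategy i b →
      G.uExpFrom i (G.replace β i b) r ≤ G.uExpFrom i β r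

/-- `(β, β̃, μ)` satisfies the subgame perfect characterization (Definition 6 of the
paper). -/
def SubgameChar (β βt : G.Profile) (μ : G.Belief) : Prop :=
  (∀ (i : Fin G.n) (j : ℕ), j < G.m i → ∀ a' ∈ G.infoA i j, ∀ a'' ∈ G.infoA i j,
    G.uDiamondAct i j a' (G.rho i j β βt) < G.uDiamondAct i j a'' (G.rho i j β βt) →
    β i j a' = 0) ∧
  (∀ (i : Fin G.n) (j : ℕ), j < G.m i → ∀ a' ∈ G.infoA i j, ∀ a'' ∈ G.infoA i j,
    G.uCond i j a' (G.rho i j β βt) μ < G.uCond i j a'' (G.rho i j β βt) μ →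
    βt i j a' = 0) ∧
  G.IsBelief μ ∧ G.YConsistent β μ

/-- `(β, μ)` is a semi-sequential equilibrium. -/
def SemiSeqEq (β : G.Profile) (μ : G.Belief) : Prop :=
  G.IsBehProfile β ∧ G.IsBelief μ ∧ G.SelfIndep β μ ∧
  ∀ (i : Fin G.n) (j : ℕ), j < G.m i → ∀ a' ∈ G.infoA i j, ∀ a'' ∈ G.infoA i j,
    G.uCond i j a' β μ < G.uCond i j a'' β μ → β i j a' = 0

/-- `(β, μ)` is a subgame perfect semi-sequential equilibrium. -/
def SubgameSemiSeqEq (β : G.Profile) (μ : G.Belief) : Prop :=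
  G.IsBehProfile β ∧ G.IsBelief μ ∧ G.YConsistent β μ ∧
  ∀ (i : Fin G.n) (j : ℕ), j < G.m i → ∀ a' ∈ G.infoA i j, ∀ a'' ∈ G.infoA i j,
    G.uCond i j a' β μ < G.uCond i j a'' β μ → β i j a' = 0

/-- `d(I_i^j)`: the number of information sets of player `i` containing a prefix of some
history of `I_i^j` (counting `I_i^j` itself). -/
def dInfo (i : Fin G.n) (j : ℕ) : ℕ :=
  ((Finset.range (G.m i)).filter
    (fun q => ∃ h ∈ G.Info i j, ∃ p : List ℕ, p <+: h ∧ p ∈ G.Info i q)).card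

end EFG

set_option linter.unusedSectionVars false
namespace Scarf
variable {T I L : Type} [Fintype T] [Fintype I] [LinearOrder L] 

def Dom (r : I → T → L) (s : Finset T) (C : Finset I) : Prop :=
  ∀ y, ∃ i ∈ C, ∀ x ∈ s, r i y ≤ r i x

theorem Dom.mono {r : I → T → L} {s t : Finset T} {C D : Finset I} (h : Dom r s C)
    (hts : t ⊆ s) (hCD : C ⊆ D) : Dom r t D := by
  intro y
  obtain ⟨i, hi, hx⟩ := h y
  exact ⟨i, hCD hi, fun x hxt => hx x (hts hxt)⟩

/-- minimizers exist -/
theorem exists_min (r : I → T → L) (s : Finset T) (hs : s.Nonempty) :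
    ∃ m : I → T, (∀ i, m i ∈ s) ∧ ∀ i, ∀ x ∈ s, r i (m i) ≤ r i x := by
  have : ∀ i, ∃ t ∈ s, ∀ x ∈ s, r i t ≤ r i x := fun i => s.exists_min_image (r i) hs
  choose m h1 h2 using this
  exact ⟨m, h1, h2⟩

theorem Dom.surj {r : I → T → L} (hr : ∀ i, Function.Injective (r i)) {s : Finset T}
    {C : Finset I} (h : Dom r s C) {m : I → T} (hm : ∀ i, m i ∈ s)
    (hm2 : ∀ i, ∀ x ∈ s, r i (m i) ≤ r i x) : C.image m = s := by
  apply Finset.Subset.antisymm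
  · intro x hx
    obtain ⟨i, _, rfl⟩ := Finset.mem_image.1 hx
    exact hm i
  · intro x hx
    obtain ⟨i, hi, h'⟩ := h x
    refine Finset.mem_image.2 ⟨i, hi, hr i (le_antisymm (hm2 i x hx) (h' _ (hm i)))⟩

/-- Incidence between a door `d` and a room `R`. -/
def Inc (d R : Finset T × Finset I) : Prop :=
  (∃ x, x ∉ d.1 ∧ R = (insert x d.1, d.2)) ∨ (∃ i ∈ d.2, R = (d.1, d.2.erase i))

/-- The room reached through `d` in direction `i`. -/
theorem exists_room {r : I → T → L} (hr : ∀ i, Function.Injective (r i)) {t : Finset T}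
    {D : Finset I} (h : Dom r t D) {m : I → T} (hm : ∀ i, m i ∈ t)
    (hm2 : ∀ i, ∀ x ∈ t, r i (m i) ≤ r i x) {i j : I} (hi : i ∈ D) (hj : j ∈ D) (hij : i ≠ j)
    (hmij : m i = m j) :
    (Dom r t (D.erase i) ∧ ¬ ∃ x, x ∉ t ∧ Dom r (insert x t) D ∧ 
      (∀ k ∈ D.erase i, r k (m k) < r k x)) ∨
    (¬ Dom r t (D.erase i) ∧ ∃ x, (x ∉ t ∧ Dom r (insert x t) D ∧ 
      (∀ k ∈ D.erase i, r k (m k) < r k x)) ∧ ∀ x', (x' ∉ t ∧ Dom r (insert x' t) D ∧ 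
      (∀ k ∈ D.erase i, r k (m k) < r k x')) → x' = x) := by
  set X : Finset T := Finset.univ.filter (fun y => ∀ k ∈ D.erase i, r k (m k) < r k y) with hX
  have himg := h.surj hr hm hm2
  have hXt : ∀ x ∈ X, x ∉ t := by
    intro x hx hxt
    rw [← himg] at hxt
    obtain ⟨k, hk, rfl⟩ := Finset.mem_image.1 hxt
    simp only [hX, Finset.mem_filter, Finset.mem_univ, true_and] at hx
    by_cases hki : k = i
    · subst hki
      have := hx j (by simp [hj, hij.symm])
      rw [hmij] at this; exact lt_irrefl _ this
    · exact lt_irrefl _ (hx k (by simp [hki, hk]))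
  have hdom : Dom r t (D.erase i) ↔ ¬ X.Nonempty := by
    constructor
    · rintro h' ⟨x, hx⟩
      obtain ⟨k, hk, hk2⟩ := h' x
      simp only [hX, Finset.mem_filter, Finset.mem_univ, true_and] at hx
      exact absurd (hx k hk) (not_lt.2 (hk2 _ (hm k)))
    · intro hne y
      by_contra hcon
      push Not at hcon
      apply hne
      refine ⟨y, ?_⟩
      simp only [hX, Finset.mem_filter, Finset.mem_univ, true_and]
      intro k hk
      obtain ⟨x, hx, hlt⟩ := hcon k hk
      exact (hm2 k x hx).trans_lt hlt
  have hmemX : ∀ x, (∀ k ∈ D.erase i, r k (m k) < r k x) ↔ x ∈ X := by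
    intro x; simp [hX]
  simp only [hmemX]
  by_cases hne : X.Nonempty
  · right
    refine ⟨by rw [hdom]; exact not_not.2 hne, ?_⟩
    obtain ⟨x, hx, hmax⟩ := X.exists_max_image (r i) hne
    refine ⟨x, ⟨hXt x hx, ?_, hx⟩, ?_⟩
    · intro y
      by_contra hcon
      push Not at hcon
      have hyX : y ∈ X := by
        rw [← hmemX]
        intro k hk
        obtain ⟨z, hz, hlt⟩ := hcon k (Finset.mem_of_mem_erase hk)
        rcases Finset.mem_insert.1 hz with rfl | hz
        · exact ((hmemX z).2 hx k hk).trans hlt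
        · exact (hm2 k z hz).trans_lt hlt
      obtain ⟨k, hk, hk2⟩ := h y
      have hki : k = i := by
        by_contra hki
        exact absurd ((hmemX y).2 hyX k (by simp [hki, hk])) (not_lt.2 (hk2 _ (hm k)))
      subst hki
      obtain ⟨z, hz, hlt⟩ := hcon k hk
      rcases Finset.mem_insert.1 hz with rfl | hz
      · exact absurd hlt (not_lt.2 (hmax y hyX))
      · exact absurd hlt (not_lt.2 (hk2 z hz))
    · rintro x' ⟨hx't, hx'd, hx'X⟩
      by_contra hxx
      have h1 : r i x' < r i x :=
        lt_of_le_of_ne (hmax x' hx'X) (fun e => hxx (hr i e))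
      obtain ⟨k, hk, hk2⟩ := hx'd x
      by_cases hki : k = i
      · subst hki
        exact absurd (hk2 x' (by simp)) (not_le.2 h1)
      · exact absurd (hk2 (m k) (by simp [hm])) 
          (not_le.2 ((hmemX x).2 hx k (by simp [hki, hk])))
  · left
    refine ⟨hdom.2 hne, ?_⟩
    rintro ⟨x, _, _, hx⟩
    exact hne ⟨x, hx⟩

theorem door_two {r : I → T → L} (hr : ∀ i, Function.Injective (r i)) {t : Finset T}
    {D : Finset I} (h : Dom r t D) (ht : t.Nonempty) (hc : D.card = t.card + 1) :
    (Finset.univ.filter (fun R : Finset T × Finset I =>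
      Dom r R.1 R.2 ∧ Inc (t, D) R)).card = 2 := by
  obtain ⟨m, hm, hm2⟩ := exists_min r t ht
  have himg := h.surj hr hm hm2
  obtain ⟨i, hi, j, hj, hij, hmij⟩ : ∃ i ∈ D, ∃ j ∈ D, i ≠ j ∧ m i = m j :=
    Finset.exists_ne_map_eq_of_card_lt_of_maps_to (t := t) (by omega) (fun i _ => hm i)
  let Dir : I → (Finset T × Finset I) → Prop := fun d R =>
    R = (t, D.erase d) ∨ ∃ x, x ∉ t ∧ R = (insert x t, D) ∧
      ∀ k ∈ D.erase d, r k (m k) < r k x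
  have huniq : ∀ {i j : I}, i ∈ D → j ∈ D → i ≠ j → m i = m j →
      ∃ R, (Dom r R.1 R.2 ∧ Dir i R) ∧ ∀ R', Dom r R'.1 R'.2 ∧ Dir i R' → R' = R := by
    intro i j hi hj hij hmij
    rcases exists_room hr h hm hm2 hi hj hij hmij with ⟨h1, h2⟩ | ⟨h1, x, ⟨hx1, hx2, hx3⟩, h2⟩
    · refine ⟨(t, D.erase i), ⟨h1, Or.inl rfl⟩, ?_⟩
      rintro R' ⟨hd, rfl | ⟨x, hx, rfl, hx3⟩⟩
      · rfl
      · exact absurd ⟨x, hx, hd, hx3⟩ h2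
    · refine ⟨(insert x t, D), ⟨hx2, Or.inr ⟨x, hx1, rfl, hx3⟩⟩, ?_⟩
      rintro R' ⟨hd, rfl | ⟨x', hx, rfl, hx3⟩⟩
      · exact absurd hd h1
      · rw [h2 x' ⟨hx, hd, hx3⟩]
  obtain ⟨Ri, ⟨hRi, hRi'⟩, hui⟩ := huniq hi hj hij hmij
  obtain ⟨Rj, ⟨hRj, hRj'⟩, huj⟩ := huniq hj hi hij.symm hmij.symm
  have hne : Ri ≠ Rj := by
    rintro rfl
    rcases hRi' with e1 | ⟨x, hx, e1, h1⟩ <;> rcases hRj' with e2 | ⟨y, hy, e2, h2⟩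
    · have e := (Prod.mk.inj (e1.symm.trans e2)).2
      have : i ∈ D.erase j := by simp [hi, hij]
      rw [← e] at this; simp at this
    · have e := (Prod.mk.inj (e1.symm.trans e2)).1
      exact hy (by rw [e]; simp)
    · have e := (Prod.mk.inj (e1.symm.trans e2)).1
      exact hx (by rw [← e]; simp)
    · have e := (Prod.mk.inj (e1.symm.trans e2)).1
      have hxy : x = y := by
        have : x ∈ insert y t := by rw [← e]; simp
        rcases Finset.mem_insert.1 this with h | h
        · exact h
        · exact absurd h hx
      subst hxy
      obtain ⟨k, hk, hk2⟩ := h x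
      have := hk2 (m k) (hm k)
      by_cases hki : k = i
      · exact absurd (h2 k (by rw [hki]; simp [hij, hi])) (not_lt.2 this)
      · exact absurd (h1 k (by simp [hki, hk])) (not_lt.2 this)
  have hset : (Finset.univ.filter (fun R : Finset T × Finset I =>
      Dom r R.1 R.2 ∧ Inc (t, D) R)) = {Ri, Rj} := by
    have hDirInc : ∀ {d R}, d ∈ D → Dir d R → Inc (t, D) R := by
      rintro d R hd (rfl | ⟨x, hx, rfl, _⟩)
      · exact Or.inr ⟨d, hd, rfl⟩
      · exact Or.inl ⟨x, hx, rfl⟩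
    ext R
    simp only [Finset.mem_filter, Finset.mem_univ, true_and, Finset.mem_insert,
      Finset.mem_singleton]
    constructor
    · rintro ⟨hd, hinc⟩
      suffices Dir i R ∨ Dir j R by
        rcases this with h' | h'
        · exact Or.inl (hui R ⟨hd, h'⟩)
        · exact Or.inr (huj R ⟨hd, h'⟩)
      rcases hinc with ⟨x, hx, rfl⟩ | ⟨d, hdD, rfl⟩
      · simp only at hx hd
        let m' : I → T := fun k => if r k x < r k (m k) then x else m k
        have hm' : ∀ k, m' k ∈ insert x t := by
          intro k; by_cases hk : r k x < r k (m k)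
          · simp [m', hk]
          · simp [m', hk, hm]
        have hm2' : ∀ k, ∀ y ∈ insert x t, r k (m' k) ≤ r k y := by
          intro k y hy
          by_cases hk : r k x < r k (m k)
          · simp only [m', hk, if_true]
            rcases Finset.mem_insert.1 hy with rfl | hy
            · rfl
            · exact hk.le.trans (hm2 k y hy)
          · simp only [m', hk, if_false]
            rcases Finset.mem_insert.1 hy with rfl | hy
            · exact not_lt.1 hk
            · exact hm2 k y hy
        have himg' := hd.surj hr hm' hm2'
        have hinj : Set.InjOn m' (D : Set I) := by
          apply Finset.card_image_iff.1
          rw [himg', Finset.card_insert_of_notMem hx, hc]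
        have key : ∀ d ∈ D, r d x < r d (m d) → Dir d (insert x t, D) := by
          intro d hdD hlt
          refine Or.inr ⟨x, hx, rfl, ?_⟩
          intro k hk
          by_contra hcon
          have hne' : r k x ≠ r k (m k) := fun e => hx (by rw [hr k e]; exact hm k)
          have hlt' : r k x < r k (m k) := lt_of_le_of_ne (not_lt.1 hcon) hne'
          have : m' k = m' d := by simp [m', hlt, hlt']
          exact (Finset.ne_of_mem_erase hk) (hinj (Finset.mem_of_mem_erase hk) hdD this)
        by_cases h1 : r i x < r i (m i)
        · exact Or.inl (key i hi h1)
        by_cases h2 : r j x < r j (m j)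
        · exact Or.inr (key j hj h2)
        exact absurd (hinj hi hj (by simp only [m', h1, h2, if_false]; exact hmij)) hij
      · simp only at hdD hd
        by_cases hdi : d = i
        · exact Or.inl (Or.inl (by rw [hdi]))
        by_cases hdj : d = j
        · exact Or.inr (Or.inl (by rw [hdj]))
        exfalso
        have h1 := hd.surj hr hm hm2
        have h2 : ((D.erase d).erase i).image m = t := by
          rw [← h1]
          ext y
          simp only [Finset.mem_image]
          constructor
          · rintro ⟨k, hk, rfl⟩; exact ⟨k, Finset.mem_of_mem_erase hk, rfl⟩
          · rintro ⟨k, hk, rfl⟩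
            by_cases hki : k = i
            · exact ⟨j, by simp [hij.symm, hj, Ne.symm hdj], by rw [hki, hmij]⟩
            · exact ⟨k, by simp only [Finset.mem_erase] at hk ⊢; exact ⟨hki, hk⟩, rfl⟩
        have h3 : t.card ≤ ((D.erase d).erase i).card := by
          rw [← h2]; exact Finset.card_image_le
        rw [Finset.card_erase_of_mem (by simp [hi, Ne.symm hdi]),
          Finset.card_erase_of_mem hdD] at h3
        have : 0 < t.card := ht.card_pos
        omega
    · rintro (rfl | rfl)
      · exact ⟨hRi, hDirInc hi hRi'⟩
      · exact ⟨hRj, hDirInc hj hRj'⟩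
  rw [hset, Finset.card_pair hne]

theorem door_one {r : I → T → L} [Nonempty T] (hr : ∀ i, Function.Injective (r i)) (i : I) :
    (Finset.univ.filter (fun R : Finset T × Finset I =>
      Dom r R.1 R.2 ∧ Inc (∅, {i}) R)).card = 1 := by
  obtain ⟨x, -, hx⟩ := (Finset.univ : Finset T).exists_max_image (r i) Finset.univ_nonempty
  rw [Finset.card_eq_one]
  refine ⟨({x}, {i}), ?_⟩
  ext R
  simp only [Finset.mem_filter, Finset.mem_univ, true_and, Finset.mem_singleton]
  constructor
  · rintro ⟨hd, ⟨y, hy, rfl⟩ | ⟨k, hk, rfl⟩⟩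
    · obtain ⟨k, hk, hk2⟩ := hd x
      simp only [Finset.mem_singleton] at hk
      subst hk
      have := hr k (le_antisymm (hx y (Finset.mem_univ _)) (hk2 y (by simp)))
      rw [this]; rfl
    · simp only [Finset.mem_singleton] at hk
      subst hk
      obtain ⟨k', hk', _⟩ := hd x
      simp at hk'
  · rintro rfl
    refine ⟨fun y => ⟨i, by simp, fun z hz => ?_⟩, Or.inl ⟨x, by simp, rfl⟩⟩
    simp only [Finset.mem_singleton] at hz
    subst hz
    exact hx y (Finset.mem_univ _)

/-- Typed doors. -/
def TDoor (r : I → T → L) (c : T → I) (i0 : I) (d : Finset T × Finset I) : Prop :=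
  Dom r d.1 d.2 ∧ d.2.card = d.1.card + 1 ∧ i0 ∈ d.2 ∧ d.1.image c = d.2.erase i0

theorem room_even {r : I → T → L} (c : T → I) (i0 : I) {s : Finset T} {C : Finset I}
    (h : Dom r s C) (hcard : s.card = C.card) (hcol : s.image c ≠ C) :
    Even (Finset.univ.filter (fun d : Finset T × Finset I =>
      TDoor r c i0 d ∧ Inc d (s, C))).card := by
  by_cases hx0 : ∃ x0 ∈ s, (s.erase x0).image c = C.erase i0 ∧ i0 ∈ C
  · obtain ⟨x0, hx0, himg, hi0⟩ := hx0
    have hspos : 0 < s.card := Finset.card_pos.2 ⟨x0, hx0⟩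
    have hinj : Set.InjOn c ((s.erase x0 : Finset T) : Set T) := by
      apply Finset.card_image_iff.1
      rw [himg, Finset.card_erase_of_mem hi0, Finset.card_erase_of_mem hx0, hcard]
    have himg' : s.image c = insert (c x0) (C.erase i0) := by
      rw [← himg, ← Finset.image_insert, Finset.insert_erase hx0]
    have hcx0 : c x0 ≠ i0 := by
      intro e
      rw [e, Finset.insert_erase hi0] at himg'
      exact hcol himg'
    have hdA : ∀ x ∈ s, (s.erase x).image c = C.erase i0 →
        TDoor r c i0 (s.erase x, C) ∧ Inc (s.erase x, C) (s, C) := by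
      intro x hx hxi
      refine ⟨⟨h.mono (Finset.erase_subset _ _) (Finset.Subset.refl _), ?_, hi0, hxi⟩, ?_⟩
      · simp only [Finset.card_erase_of_mem hx]; omega
      · exact Or.inl ⟨x, by simp, by simp [Finset.insert_erase hx]⟩
    by_cases hC : c x0 ∈ C
    · have : c x0 ∈ (s.erase x0).image c := by rw [himg]; simp [hcx0, hC]
      obtain ⟨x1, hx1, hx1c⟩ := Finset.mem_image.1 this
      have hx1s := Finset.mem_of_mem_erase hx1
      have hx10 := Finset.ne_of_mem_erase hx1
      have hsimg : s.image c = C.erase i0 := by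
        rw [himg']; exact Finset.insert_eq_of_mem (by simp [hcx0, hC])
      have himg1 : (s.erase x1).image c = C.erase i0 := by
        rw [← hsimg]
        ext y
        simp only [Finset.mem_image]
        constructor
        · rintro ⟨k, hk, rfl⟩; exact ⟨k, Finset.mem_of_mem_erase hk, rfl⟩
        · rintro ⟨k, hk, rfl⟩
          by_cases hk1 : k = x1
          · exact ⟨x0, by simp [hx10.symm, hx0], by rw [hk1, hx1c]⟩
          · exact ⟨k, by simp [hk1, hk], rfl⟩
      have hset : (Finset.univ.filter (fun d : Finset T × Finset I =>
          TDoor r c i0 d ∧ Inc d (s, C))) = {(s.erase x0, C), (s.erase x1, C)} := by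
        ext d
        simp only [Finset.mem_filter, Finset.mem_univ, true_and, Finset.mem_insert,
          Finset.mem_singleton]
        constructor
        · rintro ⟨⟨hd1, hd2, hd3, hd4⟩, hinc⟩
          obtain ⟨t, D⟩ := d
          simp only at hd1 hd2 hd3 hd4
          rcases hinc with ⟨x, hx, e⟩ | ⟨i, hi, e⟩
          · simp only [Prod.mk.injEq] at e hx
            obtain ⟨rfl, rfl⟩ := e
            by_cases hxx0 : x = x0
            · left; subst hxx0; simp [hx]
            by_cases hxx1 : x = x1
            · right; subst hxx1; simp [hx]
            exfalso
            have a0 : x0 ∈ t := by simpa [Ne.symm hxx0] using hx0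
            have a1 : x1 ∈ t := by simpa [Ne.symm hxx1] using hx1s
            have : Set.InjOn c (t : Set T) := by
              apply Finset.card_image_iff.1
              rw [hd4, Finset.card_erase_of_mem hd3]; omega
            exact hx10 (this a1 a0 hx1c)
          · simp only [Prod.mk.injEq] at e hi
            obtain ⟨rfl, rfl⟩ := e
            exfalso
            have e2 := hd4.symm.trans hsimg
            have : ((D.erase i).erase i0).card = (D.erase i0).card := by rw [e2]
            rw [Finset.card_erase_of_mem hi0, Finset.card_erase_of_mem hd3,
              Finset.card_erase_of_mem hi] at this
            omega
        · rintro (rfl | rfl)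
          · exact hdA x0 hx0 himg
          · exact hdA x1 hx1s himg1
      rw [hset, Finset.card_pair]
      · exact even_two
      · intro e
        have e := (Prod.mk.inj e).1
        have : x1 ∈ s.erase x0 := by simp [hx10, hx1s]
        rw [e] at this; simp at this
    · have hset : (Finset.univ.filter (fun d : Finset T × Finset I =>
          TDoor r c i0 d ∧ Inc d (s, C))) = {(s.erase x0, C), (s, insert (c x0) C)} := by
        ext d
        simp only [Finset.mem_filter, Finset.mem_univ, true_and, Finset.mem_insert,
          Finset.mem_singleton]
        constructor
        · rintro ⟨⟨hd1, hd2, hd3, hd4⟩, hinc⟩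
          obtain ⟨t, D⟩ := d
          simp only at hd1 hd2 hd3 hd4
          rcases hinc with ⟨x, hx, e⟩ | ⟨i, hi, e⟩
          · simp only [Prod.mk.injEq] at e hx
            obtain ⟨rfl, rfl⟩ := e
            left
            by_cases hxx0 : x = x0
            · subst hxx0; simp [hx]
            exfalso
            have a0 : x0 ∈ t := by simpa [Ne.symm hxx0] using hx0
            have := Finset.mem_image_of_mem c a0
            rw [hd4] at this
            exact hC (Finset.mem_of_mem_erase this)
          · simp only [Prod.mk.injEq] at e hi
            obtain ⟨rfl, rfl⟩ := e
            right
            have : c x0 ∈ D.erase i0 := by rw [← hd4]; exact Finset.mem_image_of_mem c hx0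
            have h2 := Finset.mem_of_mem_erase this
            have : c x0 = i := by
              by_contra hne; exact hC (by simp [hne, h2])
            rw [this, Finset.insert_erase hi]
        · rintro (rfl | rfl)
          · exact hdA x0 hx0 himg
          · refine ⟨⟨h.mono (Finset.Subset.refl _) (Finset.subset_insert _ _), ?_, ?_, ?_⟩, ?_⟩
            · simp only [Finset.card_insert_of_notMem hC]; omega
            · simp [hi0]
            · simp only; rw [himg', Finset.erase_insert_of_ne hcx0]
            · exact Or.inr ⟨c x0, by simp, by simp [Finset.erase_insert hC]⟩
      rw [hset, Finset.card_pair]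
      · exact even_two
      · intro e
        have e := (Prod.mk.inj e).1
        have : x0 ∈ s.erase x0 := by rw [e]; exact hx0
        simp at this
  · have hset : (Finset.univ.filter (fun d : Finset T × Finset I =>
          TDoor r c i0 d ∧ Inc d (s, C))) = ∅ := by
      rw [Finset.filter_eq_empty_iff]
      rintro ⟨t, D⟩ - ⟨⟨hd1, hd2, hd3, hd4⟩, hinc⟩
      simp only at hd1 hd2 hd3 hd4
      apply hx0
      rcases hinc with ⟨x, hx, e⟩ | ⟨i, hi, e⟩
      · simp only [Prod.mk.injEq] at e hx
        obtain ⟨rfl, rfl⟩ := e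
        exact ⟨x, by simp, by simpa [hx] using hd4, hd3⟩
      · simp only [Prod.mk.injEq] at e hi
        obtain ⟨rfl, rfl⟩ := e
        have hii0 : i ≠ i0 := by
          rintro rfl; exact hcol hd4
        have : i ∈ s.image c := by rw [hd4]; simp [hii0, hi]
        obtain ⟨x, hx, hxi⟩ := Finset.mem_image.1 this
        have hinj : Set.InjOn c (s : Set T) := by
          apply Finset.card_image_iff.1
          rw [hd4, Finset.card_erase_of_mem hd3]; omega
        refine ⟨x, hx, ?_, by simp [hii0.symm, hd3]⟩
        rw [Finset.erase_right_comm, ← hd4]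
        ext y
        simp only [Finset.mem_image, Finset.mem_erase]
        constructor
        · rintro ⟨k, ⟨hk1, hk2⟩, rfl⟩
          exact ⟨fun e => hk1 (hinj hk2 hx (e.trans hxi.symm)), k, hk2, rfl⟩
        · rintro ⟨h1, k, hk, rfl⟩
          exact ⟨k, ⟨fun e => h1 (by rw [e, hxi]), hk⟩, rfl⟩
    rw [hset]; simp

/-- Scarf's lemma. -/
theorem scarf [Nonempty T] {r : I → T → L} (hr : ∀ i, Function.Injective (r i)) (c : T → I) :
    ∃ s : Finset T, s.Nonempty ∧ Dom r s (s.image c) := by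
  by_contra hcon
  push Not at hcon
  have hcol : ∀ (s : Finset T) (C : Finset I), Dom r s C → s.image c ≠ C := by
    rintro s C hd rfl
    refine hcon s ?_ hd
    obtain ⟨x0⟩ := ‹Nonempty T›
    obtain ⟨i, hi, _⟩ := hd x0
    obtain ⟨x, hx, _⟩ := Finset.mem_image.1 hi
    exact ⟨x, hx⟩
  obtain ⟨x0⟩ := id ‹Nonempty T›
  set i0 := c x0
  let doors : Finset (Finset T × Finset I) := Finset.univ.filter (TDoor r c i0)
  let rooms : Finset (Finset T × Finset I) :=
    Finset.univ.filter (fun R => Dom r R.1 R.2 ∧ R.1.card = R.2.card)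
  have hdc := Finset.sum_card_bipartiteAbove_eq_sum_card_bipartiteBelow
    (s := doors) (t := rooms) (r := Inc)
  have hR : ∀ R ∈ rooms, Even (doors.bipartiteBelow Inc R).card := by
    rintro ⟨s, C⟩ hR
    simp only [rooms, Finset.mem_filter, Finset.mem_univ, true_and] at hR
    have := room_even c i0 hR.1 hR.2 (hcol _ _ hR.1)
    rw [← Finset.filter_filter] at this
    exact this
  have hE : Even (∑ R ∈ rooms, (doors.bipartiteBelow Inc R).card) := Finset.even_sum _ hR
  rw [← hdc] at hE
  have hab : ∀ d ∈ doors, (rooms.bipartiteAbove Inc d).card =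
      (Finset.univ.filter (fun R : Finset T × Finset I => Dom r R.1 R.2 ∧ Inc d R)).card := by
    rintro ⟨t, D⟩ hd
    simp only [doors, Finset.mem_filter, Finset.mem_univ, true_and] at hd
    obtain ⟨-, hd2, -⟩ := hd
    simp only at hd2
    congr 1
    ext R
    simp only [rooms, Finset.bipartiteAbove, Finset.mem_filter, Finset.mem_univ, true_and]
    constructor
    · rintro ⟨⟨h1, _⟩, h2⟩; exact ⟨h1, h2⟩
    · rintro ⟨h1, h2⟩
      refine ⟨⟨h1, ?_⟩, h2⟩
      rcases h2 with ⟨x, hx, rfl⟩ | ⟨i, hi, rfl⟩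
      · simp only at hx ⊢; rw [Finset.card_insert_of_notMem hx, hd2]
      · simp only at hi ⊢; rw [Finset.card_erase_of_mem hi, hd2]; rfl
  have h0 : ((∅, {i0}) : Finset T × Finset I) ∈ doors := by
    simp only [doors, Finset.mem_filter, Finset.mem_univ, true_and]
    refine ⟨fun y => ⟨i0, by simp, by simp⟩, by simp, by simp, by simp⟩
  rw [← Finset.add_sum_erase _ _ h0, hab _ h0, door_one hr] at hE
  have hE2 : Even (∑ d ∈ doors.erase (∅, {i0}), (rooms.bipartiteAbove Inc d).card) := by
    apply Finset.even_sum
    intro d hd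
    have hd' := Finset.mem_of_mem_erase hd
    have hne := Finset.ne_of_mem_erase hd
    rw [hab d hd']
    obtain ⟨t, D⟩ := d
    simp only [doors, Finset.mem_filter, Finset.mem_univ, true_and] at hd'
    obtain ⟨hd1, hd2, hd3, hd4⟩ := hd'
    simp only at hd1 hd2 hd3 hd4
    rw [door_two hr hd1 ?_ hd2]
    · exact even_two
    · by_contra ht
      rw [Finset.not_nonempty_iff_eq_empty] at ht
      subst ht
      apply hne
      simp only [Finset.card_empty, zero_add] at hd2
      obtain ⟨a, rfl⟩ := Finset.card_eq_one.1 hd2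
      simp only [Finset.mem_singleton] at hd3
      rw [hd3]
  rw [add_comm, Nat.even_add_one] at hE
  exact hE hE2

end Scarf

namespace Scarf
open Filter Topology

theorem approx {J : Type} [Fintype J] [Nonempty J] (f : (J → ℝ) → (J → ℝ))
    (hf : ∀ x ∈ stdSimplex ℝ J, f x ∈ stdSimplex ℝ J) (N : ℕ) (hN : 0 < N) :
    ∃ z ∈ stdSimplex ℝ J, ∀ i, ∃ w ∈ stdSimplex ℝ J,
      (∀ j, |w j - z j| ≤ (Fintype.card J : ℝ) / N) ∧
      w i ≤ f w i + (Fintype.card J : ℝ) / N := by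
  let T : Type := {x : J → ℕ // x ∈ Finset.piAntidiag (Finset.univ : Finset J) N}
  have hT : ∀ x : T, ∑ j, x.1 j = N := fun x => (Finset.mem_piAntidiag.1 x.2).1
  let mk : ∀ x : J → ℕ, ∑ j, x j = N → T := fun x hx =>
    ⟨x, Finset.mem_piAntidiag.2 ⟨hx, fun _ _ => Finset.mem_univ _⟩⟩
  obtain ⟨j0⟩ := id ‹Nonempty J›
  have : Nonempty T := ⟨mk (Pi.single j0 N) (by simp)⟩
  let e := Fintype.equivFin T
  let r : J → T → (ℕ ×ₗ Fin (Fintype.card T)) := fun i x => toLex (x.1 i, e x)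
  have hr : ∀ i, Function.Injective (r i) := by
    intro i x y hxy
    have := congrArg (fun p => (ofLex p).2) hxy
    exact e.injective this
  have hr1 : ∀ i x y, r i x ≤ r i y → x.1 i ≤ y.1 i := by
    intro i x y h
    exact Prod.Lex.monotone_fst _ _ h
  let p : T → J → ℝ := fun x j => (x.1 j : ℝ) / N
  have hN' : (0:ℝ) < N := by exact_mod_cast hN
  have hp : ∀ x, p x ∈ stdSimplex ℝ J := by
    intro x
    refine ⟨fun j => by positivity, ?_⟩
    simp only [p]
    rw [← Finset.sum_div, ← Nat.cast_sum, hT x, div_self hN'.ne']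
  have hc : ∀ x : T, ∃ i, p x i ≤ f (p x) i := by
    intro x
    by_contra hcon
    push Not at hcon
    have h1 : ∑ i, f (p x) i < ∑ i, p x i :=
      Finset.sum_lt_sum_of_nonempty Finset.univ_nonempty (fun i _ => hcon i)
    rw [(hf _ (hp x)).2, (hp x).2] at h1
    exact lt_irrefl _ h1
  choose c hc using hc
  obtain ⟨s, hs, hdom⟩ := scarf hr c
  set C := s.image c with hC
  have hCne : C.Nonempty := hs.image c
  obtain ⟨a, ha1, ha2⟩ : ∃ a : J → ℕ, (∀ i, ∀ x ∈ s, a i ≤ x.1 i) ∧ ∀ i, ∃ x ∈ s, a i = x.1 i := by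
    have : ∀ i, ∃ t ∈ s, ∀ x ∈ s, t.1 i ≤ x.1 i := fun i => s.exists_min_image (fun x => x.1 i) hs
    choose t h1 h2 using this
    exact ⟨fun i => (t i).1 i, h2, fun i => ⟨t i, h1 i, rfl⟩⟩
  have hsum : N < ∑ i ∈ C, (a i + 1) := by
    by_contra hle
    push Not at hle
    obtain ⟨i1, hi1⟩ := hCne
    let y : J → ℕ := fun i => (if i ∈ C then a i + 1 else 0) +
      (if i = i1 then N - ∑ i ∈ C, (a i + 1) else 0)
    have hy : ∑ i, y i = N := by
      simp only [y, Finset.sum_add_distrib, Finset.sum_ite_eq', Finset.mem_univ, if_true]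
      rw [← Finset.sum_filter]
      simp only [Finset.filter_mem_eq_inter, Finset.univ_inter]
      rw [← Finset.sum_add_distrib]
      omega
    obtain ⟨i, hi, hi2⟩ := hdom (mk y hy)
    obtain ⟨x, hx, hxa⟩ := ha2 i
    have := hr1 _ _ _ (hi2 x hx)
    have h2 : (mk y hy).1 i = y i := rfl
    rw [h2] at this
    simp only [y, hi, if_true] at this
    omega
  have hbound : ∀ x ∈ s, ∀ i, (i ∈ C → x.1 i ≤ a i + Fintype.card J) ∧
      (i ∉ C → x.1 i ≤ Fintype.card J) := by
    intro x hx i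
    have h1 : ∑ i ∈ C, x.1 i + ∑ i ∈ Cᶜ, x.1 i = N := by
      rw [Finset.sum_add_sum_compl, hT x]
    have h2 : ∑ i ∈ C, (a i + 1) = ∑ i ∈ C, a i + C.card := by
      rw [Finset.sum_add_distrib]; simp
    have h3 : C.card ≤ Fintype.card J := Finset.card_le_univ C
    have h4 : ∑ i ∈ C, a i ≤ ∑ i ∈ C, x.1 i := Finset.sum_le_sum (fun i _ => ha1 i x hx)
    constructor
    · intro hi
      rw [← Finset.add_sum_erase _ _ hi] at h1
      rw [h2, ← Finset.add_sum_erase _ _ hi] at hsum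
      have h5 : ∑ i ∈ C.erase i, a i ≤ ∑ i ∈ C.erase i, x.1 i :=
        Finset.sum_le_sum (fun i _ => ha1 i x hx)
      omega
    · intro hi
      have : x.1 i ≤ ∑ i ∈ Cᶜ, x.1 i :=
        Finset.single_le_sum (f := fun i => x.1 i) (fun _ _ => Nat.zero_le _) (by simpa using hi)
      omega
  have hclose : ∀ x ∈ s, ∀ y ∈ s, ∀ j, |p x j - p y j| ≤ (Fintype.card J : ℝ) / N := by
    intro x hx y hy j
    simp only [p]
    rw [← sub_div, abs_div, abs_of_pos hN']
    apply div_le_div_of_nonneg_right _ hN'.le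
    obtain ⟨h1, h1'⟩ := hbound x hx j
    obtain ⟨h2, h2'⟩ := hbound y hy j
    have h3 := ha1 j x hx
    have h4 := ha1 j y hy
    have k1 : x.1 j ≤ y.1 j + Fintype.card J := by
      by_cases hj : j ∈ C
      · have := h1 hj; omega
      · have := h1' hj; omega
    have k2 : y.1 j ≤ x.1 j + Fintype.card J := by
      by_cases hj : j ∈ C
      · have := h2 hj; omega
      · have := h2' hj; omega
    have k1' : (x.1 j : ℝ) ≤ y.1 j + Fintype.card J := by exact_mod_cast k1
    have k2' : (y.1 j : ℝ) ≤ x.1 j + Fintype.card J := by exact_mod_cast k2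
    rw [abs_le]; constructor <;> linarith
  obtain ⟨x0, hx0⟩ := hs
  refine ⟨p x0, hp x0, fun i => ?_⟩
  have hpos : (0:ℝ) ≤ (Fintype.card J : ℝ) / N := by positivity
  by_cases hi : i ∈ C
  · obtain ⟨x, hx, hxi⟩ := Finset.mem_image.1 hi
    refine ⟨p x, hp x, fun j => hclose x hx x0 hx0 j, ?_⟩
    have := hc x
    rw [hxi] at this
    linarith
  · refine ⟨p x0, hp x0, fun j => hclose x0 hx0 x0 hx0 j, ?_⟩
    have h1 : p x0 i ≤ (Fintype.card J : ℝ) / N := by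
      apply div_le_div_of_nonneg_right _ hN'.le
      exact_mod_cast (hbound x0 hx0 i).2 hi
    have := (hf _ (hp x0)).1 i
    linarith

theorem brouwer {J : Type} [Fintype J] [Nonempty J] (f : (J → ℝ) → (J → ℝ))
    (hf : ∀ x ∈ stdSimplex ℝ J, f x ∈ stdSimplex ℝ J)
    (hcont : ContinuousOn f (stdSimplex ℝ J)) :
    ∃ x ∈ stdSimplex ℝ J, f x = x := by
  choose z hz w hw hwz hwf using fun N : ℕ => approx f hf (N + 1) (Nat.succ_pos N)
  obtain ⟨x, hx, φ, hφ, hlim⟩ := (isCompact_stdSimplex ℝ J).tendsto_subseq hz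
  refine ⟨x, hx, ?_⟩
  have hε : Tendsto (fun N : ℕ => (Fintype.card J : ℝ) / ((N + 1 : ℕ) : ℝ)) atTop (𝓝 0) := by
    have := (tendsto_const_div_atTop_nhds_zero_nat (Fintype.card J : ℝ))
    exact (tendsto_add_atTop_iff_nat 1).2 this
  have hε' := hε.comp hφ.tendsto_atTop
  have hwlim : ∀ i, Tendsto (fun N => w (φ N) i) atTop (𝓝 x) := by
    intro i
    rw [tendsto_pi_nhds] at hlim ⊢
    intro j
    have h1 : Tendsto (fun N => w (φ N) i j - z (φ N) j) atTop (𝓝 0) :=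
      squeeze_zero_norm (fun N => hwz (φ N) i j) hε'
    have := h1.add (hlim j)
    simpa using this
  have hle : ∀ i, x i ≤ f x i := by
    intro i
    have h1 : Tendsto (fun N => w (φ N) i) atTop (𝓝[stdSimplex ℝ J] x) :=
      tendsto_nhdsWithin_iff.2 ⟨hwlim i, Eventually.of_forall fun N => hw _ _⟩
    have h2 := (hcont x hx).tendsto.comp h1
    have h3 := (tendsto_pi_nhds.1 h2 i).add hε'
    have h4 := tendsto_pi_nhds.1 (hwlim i) i
    rw [add_zero] at h3
    exact le_of_tendsto_of_tendsto' h4 h3 (fun N => hwf _ _)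
  have hsum : ∑ i, x i = ∑ i, f x i := by rw [hx.2, (hf x hx).2]
  funext i
  exact ((Finset.sum_eq_sum_iff_of_le (fun i _ => hle i)).1 hsum i (Finset.mem_univ i)).symm

/-- A Nash-type variational lemma on a product of simplices. -/
theorem nash {K : Type} [Fintype K] {A : K → Type} [∀ k, Fintype (A k)] [∀ k, Nonempty (A k)]
    (v : (∀ k, A k → ℝ) → (∀ k, A k → ℝ))
    (hv : ContinuousOn v {x | ∀ k, x k ∈ stdSimplex ℝ (A k)}) :
    ∃ x : ∀ k, A k → ℝ, (∀ k, x k ∈ stdSimplex ℝ (A k)) ∧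
      ∀ k a b, v x k a < v x k b → x k a = 0 := by
  rcases isEmpty_or_nonempty K with hK | hK
  · exact ⟨fun k => hK.elim k, fun k => hK.elim k, fun k => hK.elim k⟩
  set S : Set (∀ k, A k → ℝ) := {x | ∀ k, x k ∈ stdSimplex ℝ (A k)} with hS
  let n : ℝ := Fintype.card K
  have hn : 0 < n := by simp only [n]; exact_mod_cast Fintype.card_pos
  -- the Nash map
  let g : (∀ k, A k → ℝ) → ∀ k, A k → ℝ := fun x k a =>
    max 0 (v x k a - ∑ b, x k b * v x k b)
  let F : (∀ k, A k → ℝ) → ∀ k, A k → ℝ := fun x k a =>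
    (x k a + g x k a) / (1 + ∑ b, g x k b)
  have hg0 : ∀ x k a, 0 ≤ g x k a := fun x k a => le_max_left _ _
  have hden : ∀ x k, 0 < 1 + ∑ b, g x k b := fun x k => by
    have := Finset.sum_nonneg (fun b (_ : b ∈ Finset.univ) => hg0 x k b)
    linarith
  have hFS : ∀ x ∈ S, F x ∈ S := by
    intro x hx k
    refine ⟨fun a => div_nonneg (add_nonneg ((hx k).1 a) (hg0 x k a)) (hden x k).le, ?_⟩
    simp only [F]
    rw [← Finset.sum_div, Finset.sum_add_distrib, (hx k).2, div_self (hden x k).ne']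
  have hap : ∀ k a, Continuous (fun x : (∀ k, A k → ℝ) => x k a) := by
    intro k a; fun_prop
  have hvc : ∀ k a, ContinuousOn (fun x => v x k a) S := by
    intro k a
    exact (hap k a).comp_continuousOn hv
  have hxc : ∀ k a, ContinuousOn (fun x : (∀ k, A k → ℝ) => x k a) S := fun k a =>
    (hap k a).continuousOn
  have hgc : ∀ k a, ContinuousOn (fun x => g x k a) S := by
    intro k a
    refine ContinuousOn.sup continuousOn_const ((hvc k a).sub ?_)
    exact continuousOn_finsetSum _ (fun b _ => (hxc k b).mul (hvc k b))
  have hFc : ContinuousOn F S := by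
    refine continuousOn_pi.2 fun k => continuousOn_pi.2 fun a => ?_
    refine ContinuousOn.div ((hxc k a).add (hgc k a)) ?_ (fun x _ => (hden x k).ne')
    exact continuousOn_const.add (continuousOn_finsetSum _ (fun b _ => hgc k b))
  -- the retraction
  let J := Σ k, A k
  have : Nonempty J := ⟨⟨Classical.arbitrary K, Classical.arbitrary _⟩⟩
  let ρ : (J → ℝ) → ∀ k, A k → ℝ := fun z k a =>
    (z ⟨k, a⟩ + max 0 (1 / n - ∑ b, z ⟨k, b⟩) / Fintype.card (A k)) /
      (max (1 / n) (∑ b, z ⟨k, b⟩))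
  have hm : ∀ (z : J → ℝ) k, 0 < max (1 / n) (∑ b, z ⟨k, b⟩) := fun z k =>
    lt_max_of_lt_left (by positivity)
  have hρS : ∀ z ∈ stdSimplex ℝ J, ρ z ∈ S := by
    intro z hz k
    refine ⟨fun a => div_nonneg (add_nonneg (hz.1 _) ?_) (hm z k).le, ?_⟩
    · exact div_nonneg (le_max_left _ _) (by positivity)
    · simp only [ρ]
      rw [← Finset.sum_div, Finset.sum_add_distrib, Finset.sum_const, Finset.card_univ,
        nsmul_eq_mul, mul_div_cancel₀ _ (by exact_mod_cast Fintype.card_ne_zero)]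
      rw [div_eq_one_iff_eq (hm z k).ne']
      rcases le_total (1 / n) (∑ b, z ⟨k, b⟩) with h | h
      · rw [max_eq_right h, max_eq_left (by linarith)]; ring
      · rw [max_eq_left h, max_eq_right (by linarith)]; ring
  have hρc : Continuous ρ := by
    refine continuous_pi fun k => continuous_pi fun a => ?_
    refine Continuous.div ?_ ?_ (fun z => (hm z k).ne') <;> fun_prop
  let Φ : (J → ℝ) → (J → ℝ) := fun z j => F (ρ z) j.1 j.2 / n
  have hΦ : ∀ z ∈ stdSimplex ℝ J, Φ z ∈ stdSimplex ℝ J := by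
    intro z hz
    have h := hFS _ (hρS z hz)
    refine ⟨fun j => div_nonneg ((h j.1).1 j.2) hn.le, ?_⟩
    simp only [Φ]
    rw [← Finset.sum_div, Fintype.sum_sigma]
    simp only [(h _).2]
    simp [n]
  have hΦc : ContinuousOn Φ (stdSimplex ℝ J) := by
    refine continuousOn_pi.2 fun j => ?_
    refine ContinuousOn.div_const ?_ _
    exact (hap j.1 j.2).comp_continuousOn
      (hFc.comp hρc.continuousOn hρS)
  obtain ⟨z, hz, hfix⟩ := brouwer Φ hΦ hΦc
  set x := ρ z with hx
  have hxS : x ∈ S := hρS z hz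
  have hzx : ∀ k a, z ⟨k, a⟩ = F x k a / n := fun k a => by
    conv_lhs => rw [← hfix]
  have hsumz : ∀ k, ∑ b, z ⟨k, b⟩ = 1 / n := by
    intro k
    simp only [hzx]
    rw [← Finset.sum_div, (hFS x hxS k).2]
  have hxF : ∀ k a, x k a = F x k a := by
    intro k a
    have : x k a = (z ⟨k, a⟩ + max 0 (1 / n - ∑ b, z ⟨k, b⟩) / Fintype.card (A k)) /
      (max (1 / n) (∑ b, z ⟨k, b⟩)) := rfl
    rw [this, hsumz, hzx]
    simp [div_div_eq_mul_div, hn.ne']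
  refine ⟨x, hxS, ?_⟩
  intro k a b hab
  set vb := ∑ b, x k b * v x k b with hvb
  set G := ∑ b, g x k b with hG
  have hxg : ∀ a, x k a * G = g x k a := by
    intro a
    have h1 := hxF k a
    have h2 : F x k a = (x k a + g x k a) / (1 + G) := rfl
    rw [h2, eq_div_iff (hden x k).ne'] at h1
    linarith
  -- some action with positive weight and payoff at most average
  have hex : ∃ a, 0 < x k a ∧ v x k a ≤ vb := by
    by_contra hcon
    push Not at hcon
    have h1 : ∀ a, x k a * vb ≤ x k a * v x k a := by
      intro a
      rcases ((hxS k).1 a).eq_or_lt with h | h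
      · rw [← h]; simp
      · exact mul_le_mul_of_nonneg_left (hcon a h).le h.le
    have hp : ∃ a, 0 < x k a := by
      by_contra hc
      push Not at hc
      have := Finset.sum_nonpos (fun a (_ : a ∈ Finset.univ) => hc a)
      rw [(hxS k).2] at this
      linarith
    obtain ⟨a0, ha0⟩ := hp
    have h2 : ∑ a, x k a * vb < ∑ a, x k a * v x k a :=
      Finset.sum_lt_sum (fun a _ => h1 a)
        ⟨a0, Finset.mem_univ _, mul_lt_mul_of_pos_left (hcon a0 ha0) ha0⟩
    rw [← Finset.sum_mul, (hxS k).2, one_mul] at h2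
    exact lt_irrefl _ h2
  obtain ⟨a0, ha0, hle⟩ := hex
  have hg : g x k a0 = 0 := max_eq_left (by linarith)
  have hG0 : G = 0 := by
    have := hxg a0
    rw [hg] at this
    exact (mul_eq_zero.1 this).resolve_left ha0.ne'
  have hall : ∀ a, v x k a ≤ vb := by
    intro a
    have h1 := hxg a
    rw [hG0, mul_zero] at h1
    have h2 : v x k a - vb ≤ g x k a := le_max_right _ _
    linarith
  by_contra hne
  have hpos : 0 < x k a := lt_of_le_of_ne ((hxS k).1 a) (Ne.symm hne)
  have h2 : ∑ a, x k a * v x k a < ∑ a, x k a * vb :=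
    Finset.sum_lt_sum (fun a _ => mul_le_mul_of_nonneg_left (hall a) ((hxS k).1 a))
      ⟨a, Finset.mem_univ _, mul_lt_mul_of_pos_left (hab.trans_le (hall b)) hpos⟩
  rw [← Finset.sum_mul, (hxS k).2, one_mul] at h2
  exact lt_irrefl _ h2

end Scarf

namespace EFG
open Filter Topology

/-- Like `prodAlongNot`, for an arbitrary move weight `q`. -/
def gNot (G : EFG) (i : Fin G.n) (q : List ℕ → ℕ → ℝ) : List ℕ → List ℕ → ℝ
  | _, [] => 1
  | pre, b :: rest => (if G.P pre = some i then 1 else q pre b) * gNot G i q (pre ++ [b]) rest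

/-- Perturbed move weights. -/
def qPert (G : EFG) (β : G.Profile) (ε : ℝ) (h : List ℕ) (a : ℕ) : ℝ := G.moveProb β h a + ε

theorem prodAlongNot_eq (G : EFG) (i : Fin G.n) (β : G.Profile) (pre rest : List ℕ) :
    G.prodAlongNot i β pre rest = G.gNot i (G.qPert β 0) pre rest := by
  induction rest generalizing pre with
  | nil => rfl
  | cons b rest ih => simp [prodAlongNot, gNot, ih, qPert]

theorem continuous_moveProb (G : EFG) (h : List ℕ) (a : ℕ) :
    Continuous (fun β : G.Profile => G.moveProb β h a) := by
  unfold moveProb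
  cases G.P h with
  | none => simp only [Option.elim]; fun_prop
  | some i => simp only [Option.elim]; fun_prop

theorem continuous_gNot (G : EFG) (i : Fin G.n) (pre rest : List ℕ) :
    Continuous (fun p : G.Profile × ℝ => G.gNot i (G.qPert p.1 p.2) pre rest) := by
  induction rest generalizing pre with
  | nil => simp only [gNot]; fun_prop
  | cons b rest ih =>
    simp only [gNot]
    refine Continuous.mul ?_ (ih _)
    split_ifs
    · fun_prop
    · exact ((G.continuous_moveProb pre b).comp continuous_fst).add continuous_snd

theorem continuous_prodAlong (G : EFG) (pre rest : List ℕ) :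
    Continuous (fun β : G.Profile => G.prodAlong β pre rest) := by
  induction rest generalizing pre with
  | nil => simp only [prodAlong]; fun_prop
  | cons b rest ih => 
    simp only [prodAlong]
    exact (G.continuous_moveProb pre b).mul (ih _)

theorem continuous_nuAux (G : EFG) (i : Fin G.n) (j : ℕ) (pre rest : List ℕ) :
    Continuous (fun p : G.Profile × G.Belief => G.nuAux i j p.1 (p.2 i j) pre rest) := by
  induction rest generalizing pre with
  | nil => simp only [nuAux]; fun_prop
  | cons b rest ih => 
    simp only [nuAux]
    split_ifs
    · refine Continuous.mul (by fun_prop) ((G.continuous_prodAlong _ _).comp continuous_fst)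
    · exact ih _

theorem continuous_uCond (G : EFG) (i : Fin G.n) (j a : ℕ) :
    Continuous (fun p : G.Profile × G.Belief => G.uCond i j a p.1 p.2) := by
  unfold uCond nu
  exact continuous_finsetSum _ (fun h _ => continuous_const.mul (G.continuous_nuAux i j [] h))

theorem gNot_pos (G : EFG) (i : Fin G.n) (q : List ℕ → ℕ → ℝ) (hq : ∀ h a, 0 < q h a)
    (pre rest : List ℕ) : 0 < G.gNot i q pre rest := by
  induction rest generalizing pre with
  | nil => simp [gNot]
  | cons b rest ih =>
    simp only [gNot]
    refine mul_pos ?_ (ih _)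
    split_ifs
    · exact one_pos
    · exact hq _ _

/-- Beliefs derived from perturbed weights. -/
def muPert (G : EFG) (β : G.Profile) (ε : ℝ) : G.Belief := fun i j h =>
  if h ∈ G.Info i j then
    G.gNot i (G.qPert β ε) [] h / ∑ h' ∈ G.Info i j, G.gNot i (G.qPert β ε) [] h'
  else 0

theorem qPert_pos (G : EFG) (β : G.Profile) (hβ : ∀ i j a, 0 ≤ β i j a) {ε : ℝ} (hε : 0 < ε)
    (h : List ℕ) (a : ℕ) : 0 < G.qPert β ε h a := by
  unfold qPert moveProb
  cases G.P h with
  | none => have := G.fc_nonneg h a; simp only [Option.elim]; linarith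
  | some i => have := hβ i (G.infoIdx h) a; simp only [Option.elim]; linarith

theorem den_pos (G : EFG) (β : G.Profile) (hβ : ∀ i j a, 0 ≤ β i j a) {ε : ℝ} (hε : 0 < ε)
    (i : Fin G.n) (j : ℕ) (hne : (G.Info i j).Nonempty) :
    0 < ∑ h' ∈ G.Info i j, G.gNot i (G.qPert β ε) [] h' :=
  Finset.sum_pos (fun h _ => G.gNot_pos i _ (G.qPert_pos β hβ hε) [] h) hne

theorem continuousOn_muPert (G : EFG) {ε : ℝ} (hε : 0 < ε) :
    ContinuousOn (fun β : G.Profile => G.muPert β ε) {β | ∀ i j a, 0 ≤ β i j a} := by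
  refine continuousOn_pi.2 fun i => continuousOn_pi.2 fun j => continuousOn_pi.2 fun h => ?_
  unfold muPert
  have hc : ∀ h, Continuous (fun β : G.Profile => G.gNot i (G.qPert β ε) [] h) := fun h =>
    (G.continuous_gNot i [] h).comp (f := fun β : G.Profile => (β, ε)) (by fun_prop)
  by_cases hh : h ∈ G.Info i j
  · simp only [hh, if_true]
    refine ContinuousOn.div (hc h).continuousOn
      (continuous_finsetSum _ (fun h' _ => hc h')).continuousOn ?_
    intro β hβ
    exact (G.den_pos β hβ hε i j ⟨h, hh⟩).ne'
  · simp only [hh, if_false]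
    exact continuousOn_const

/-- Index type of all information sets. -/
abbrev KI (G : EFG) : Type := Σ i : Fin G.n, Fin (G.m i)

/-- Actions at an information set. -/
abbrev AI (G : EFG) (k : G.KI) : Type := {a : ℕ // a ∈ G.infoA k.1 k.2}

/-- Extend a family of distributions to a profile. -/
def toProf (G : EFG) (x : ∀ k : G.KI, G.AI k → ℝ) : G.Profile := fun i j a =>
  if hj : j < G.m i then
    if ha : a ∈ G.infoA i j then x ⟨i, ⟨j, hj⟩⟩ ⟨a, ha⟩ else 0
  else 0

theorem continuous_toProf (G : EFG) : Continuous G.toProf := by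
  refine continuous_pi fun i => continuous_pi fun j => continuous_pi fun a => ?_
  unfold toProf
  split_ifs <;> fun_prop

theorem infoA_nonempty (G : EFG) (i : Fin G.n) (j : ℕ) (hj : j < G.m i) :
    (G.infoA i j).Nonempty := by
  obtain ⟨h, hh⟩ := G.info_nonempty i j hj
  obtain ⟨_, _, ⟨a, ha⟩, _⟩ := (G.info_spec i j h hj).1 hh
  refine ⟨a, ?_⟩
  unfold infoA
  rw [Finset.mem_sup]
  exact ⟨h, hh, by simp [A, ha, G.act_mem h a ha]⟩

/-- Perturbed equilibria. -/
theorem exists_pert (G : EFG) {ε : ℝ} (hε : 0 < ε) :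
    ∃ (β : G.Profile) (μ : G.Belief), (∀ i j a, β i j a ∈ Set.Icc (0:ℝ) 1) ∧
      (∀ i j h, μ i j h ∈ Set.Icc (0:ℝ) 1) ∧ G.IsBehProfile β ∧ G.IsBelief μ ∧
      (∀ (i : Fin G.n) (j : ℕ), j < G.m i → ∀ h ∈ G.Info i j,
        (∑ h' ∈ G.Info i j, G.gNot i (G.qPert β ε) [] h') * μ i j h =
          G.gNot i (G.qPert β ε) [] h) ∧
      ∀ (i : Fin G.n) (j : ℕ), j < G.m i → ∀ a' ∈ G.infoA i j, ∀ a'' ∈ G.infoA i j,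
        G.uCond i j a' β μ < G.uCond i j a'' β μ → β i j a' = 0 := by
  have : ∀ k : G.KI, Nonempty (G.AI k) := fun k =>
    (G.infoA_nonempty k.1 k.2 k.2.2).to_subtype
  let S : Set (∀ k : G.KI, G.AI k → ℝ) := {x | ∀ k, x k ∈ stdSimplex ℝ (G.AI k)}
  have hIcc : ∀ x ∈ S, ∀ i j a, G.toProf x i j a ∈ Set.Icc (0:ℝ) 1 := by
    intro x hx i j a
    unfold toProf
    split_ifs with hj ha
    · exact mem_Icc_of_mem_stdSimplex (hx ⟨i, ⟨j, hj⟩⟩) ⟨a, ha⟩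
    · simp
    · simp
  let v : (∀ k : G.KI, G.AI k → ℝ) → (∀ k : G.KI, G.AI k → ℝ) := fun x k a =>
    G.uCond k.1 k.2 a (G.toProf x) (G.muPert (G.toProf x) ε)
  have hv : ContinuousOn v S := by
    refine continuousOn_pi.2 fun k => continuousOn_pi.2 fun a => ?_
    refine (G.continuous_uCond k.1 k.2 a).comp_continuousOn 
      (f := fun x => (G.toProf x, G.muPert (G.toProf x) ε)) ?_
    refine G.continuous_toProf.continuousOn.prodMk ?_
    exact (G.continuousOn_muPert hε).comp G.continuous_toProf.continuousOn
      (fun x hx i j a => (hIcc x hx i j a).1)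
  obtain ⟨x, hx, hopt⟩ := Scarf.nash v hv
  have hβ0 : ∀ i j a, 0 ≤ G.toProf x i j a := fun i j a => (hIcc x hx i j a).1
  have hμ0 : ∀ i j h, 0 ≤ G.muPert (G.toProf x) ε i j h := by
    intro i j h
    unfold muPert
    split_ifs with hh
    · exact div_nonneg (G.gNot_pos i _ (G.qPert_pos _ hβ0 hε) _ _).le
        (G.den_pos _ hβ0 hε i j ⟨h, hh⟩).le
    · exact le_rfl
  refine ⟨G.toProf x, G.muPert (G.toProf x) ε, hIcc x hx, ?_, ?_, ?_, ?_, ?_⟩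
  · intro i j h
    refine ⟨hμ0 i j h, ?_⟩
    unfold muPert
    split_ifs with hh
    · rw [div_le_one (G.den_pos _ hβ0 hε i j ⟨h, hh⟩)]
      exact Finset.single_le_sum
        (f := fun h => G.gNot i (G.qPert (G.toProf x) ε) [] h)
        (fun h' _ => (G.gNot_pos i _ (G.qPert_pos _ hβ0 hε) _ _).le) hh
    · exact zero_le_one
  · intro i j hj
    refine ⟨fun a _ => hβ0 i j a, ?_⟩
    rw [← (hx ⟨i, ⟨j, hj⟩⟩).2, ← Finset.sum_coe_sort]
    refine Finset.sum_congr rfl fun a _ => ?_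
    simp [toProf, hj]
  · intro i j hj
    refine ⟨fun h _ => hμ0 i j h, ?_⟩
    have : ∀ h ∈ G.Info i j, G.muPert (G.toProf x) ε i j h =
        G.gNot i (G.qPert (G.toProf x) ε) [] h /
          ∑ h' ∈ G.Info i j, G.gNot i (G.qPert (G.toProf x) ε) [] h' := by
      intro h hh; simp [muPert, hh]
    rw [Finset.sum_congr rfl this, ← Finset.sum_div,
      div_self (G.den_pos _ hβ0 hε i j (G.info_nonempty i j hj)).ne']
  · intro i j hj h hh
    simp only [muPert, hh, if_true]
    rw [mul_div_cancel₀ _ (G.den_pos _ hβ0 hε i j (G.info_nonempty i j hj)).ne']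
  · intro i j hj a' ha' a'' ha'' hlt
    have := hopt ⟨i, ⟨j, hj⟩⟩ ⟨a', ha'⟩ ⟨a'', ha''⟩ hlt
    simpa [toProf, hj, ha'] using this

end EFG

open Filter Topology in
/-- Every finite extensive-form game with perfect recall possesses a semi-sequential
equilibrium. -/
theorem stmt13 (G : EFG) (hPR : G.PerfectRecall) :
    ∃ (β : G.Profile) (μ : G.Belief), G.SemiSeqEq β μ := by
  choose β μ hβI hμI hβ hμ hS hopt using
    fun N : ℕ => G.exists_pert (ε := 1 / ((N : ℝ) + 1)) Nat.one_div_pos_of_nat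
  let Q1 : Set G.Profile := Set.univ.pi fun _ => Set.univ.pi fun _ => Set.univ.pi fun _ =>
    Set.Icc (0:ℝ) 1
  let Q2 : Set G.Belief := Set.univ.pi fun _ => Set.univ.pi fun _ => Set.univ.pi fun _ =>
    Set.Icc (0:ℝ) 1
  have hQ1 : IsCompact Q1 := isCompact_univ_pi fun _ => isCompact_univ_pi fun _ =>
    isCompact_univ_pi fun _ => isCompact_Icc
  have hQ2 : IsCompact Q2 := isCompact_univ_pi fun _ => isCompact_univ_pi fun _ =>
    isCompact_univ_pi fun _ => isCompact_Icc
  obtain ⟨⟨β', μ'⟩, -, φ, hφ, hlim⟩ := (hQ1.prod hQ2).tendsto_subseq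
    (x := fun N => (β N, μ N))
    (fun N => ⟨fun i _ j _ a _ => hβI N i j a, fun i _ j _ h _ => hμI N i j h⟩)
  have hε : Tendsto (fun N : ℕ => 1 / ((N : ℝ) + 1)) atTop (𝓝 0) :=
    tendsto_one_div_add_atTop_nhds_zero_nat
  have hεφ := hε.comp hφ.tendsto_atTop
  have hβlim : Tendsto (fun N => β (φ N)) atTop (𝓝 β') :=
    (continuous_fst.tendsto _).comp hlim
  have hμlim : Tendsto (fun N => μ (φ N)) atTop (𝓝 μ') :=
    (continuous_snd.tendsto _).comp hlim
  have hβl : ∀ i j a, Tendsto (fun N => β (φ N) i j a) atTop (𝓝 (β' i j a)) := fun i j a =>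
    tendsto_pi_nhds.1 (tendsto_pi_nhds.1 (tendsto_pi_nhds.1 hβlim i) j) a
  have hμl : ∀ i j a, Tendsto (fun N => μ (φ N) i j a) atTop (𝓝 (μ' i j a)) := fun i j a =>
    tendsto_pi_nhds.1 (tendsto_pi_nhds.1 (tendsto_pi_nhds.1 hμlim i) j) a
  refine ⟨β', μ', ?_, ?_, ?_, ?_⟩
  · intro i j hj
    refine ⟨fun a ha => ge_of_tendsto' (hβl i j a) fun N => (hβI _ i j a).1, ?_⟩
    have h1 := tendsto_finsetSum (G.infoA i j) (fun a _ => hβl i j a)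
    have h2 : ∀ N, ∑ a ∈ G.infoA i j, β (φ N) i j a = 1 := fun N => (hβ (φ N) i j hj).2
    simp only [h2] at h1
    exact tendsto_nhds_unique h1 tendsto_const_nhds
  · intro i j hj
    refine ⟨fun a ha => ge_of_tendsto' (hμl i j a) fun N => (hμI _ i j a).1, ?_⟩
    have h1 := tendsto_finsetSum (G.Info i j) (fun a _ => hμl i j a)
    have h2 : ∀ N, ∑ a ∈ G.Info i j, μ (φ N) i j a = 1 := fun N => (hμ (φ N) i j hj).2
    simp only [h2] at h1
    exact tendsto_nhds_unique h1 tendsto_const_nhds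
  · intro i j hj h hh
    have hg : ∀ h, Tendsto (fun N => G.gNot i (G.qPert (β (φ N)) (1 / ((φ N : ℝ) + 1))) [] h)
        atTop (𝓝 (G.Sh i β' h)) := by
      intro h
      have h1 := ((G.continuous_gNot i [] h).tendsto (β', 0)).comp (hβlim.prodMk_nhds hεφ)
      rw [EFG.Sh, EFG.prodAlongNot_eq]
      exact h1
    have h2 := (tendsto_finsetSum (G.Info i j) (fun h' _ => hg h')).mul (hμl i j h)
    refine tendsto_nhds_unique h2 ?_
    refine (hg h).congr fun N => ?_
    exact (hS (φ N) i j hj h hh).symm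
  · intro i j hj a' ha' a'' ha'' hlt
    have h1 := ((G.continuous_uCond i j a').tendsto (β', μ')).comp hlim
    have h2 := ((G.continuous_uCond i j a'').tendsto (β', μ')).comp hlim
    have h3 := h1.eventually_lt h2 hlt
    have h4 : (fun N => β (φ N) i j a') =ᶠ[atTop] fun _ => (0:ℝ) :=
      h3.mono fun N hN => hopt (φ N) i j hj a' ha' a'' ha'' hN
    exact tendsto_nhds_unique ((hβl i j a').congr' h4) tendsto_const_nhds
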